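/- Let 0 < s ≤ 1/5 and fix y ∈ ℝ. Let w : ℝ → ℝ be the continuous 1-periodic function with w(y) = 0, w'(x) = −7/2 for x ∈ (y − 1/8, y) and w'(x) = 1/2 for x ∈ (y, y + 7/8). Then w is a viscosity subsolution of F(|3/2 + w'(x)|) − V(x) = 1 on ℝ. -/

import Mathlib

open Filter Set
open scoped Topology

noncomputable section

/-- Viscosity subsolution of `E(x, u(x), u'(x)) = 0` on `ℝ`. -/
def ViscSub1 (E : ℝ → ℝ → ℝ → ℝ) (u : ℝ → ℝ) : Prop :=
  ∀ φ : ℝ → ℝ, ContDiff ℝ 1 φ → ∀ x₀ : ℝ, IsLocalMax (u - φ) x₀ →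
    E x₀ (u x₀) (deriv φ x₀) ≤ 0

/-- Viscosity supersolution of `E(x, u(x), u'(x)) = 0` on `ℝ`. -/
def ViscSuper1 (E : ℝ → ℝ → ℝ → ℝ) (u : ℝ → ℝ) : Prop :=
  ∀ φ : ℝ → ℝ, ContDiff ℝ 1 φ → ∀ x₀ : ℝ, IsLocalMin (u - φ) x₀ →
    0 ≤ E x₀ (u x₀) (deriv φ x₀)

/-- Viscosity solution of `E(x, u(x), u'(x)) = 0` on `ℝ`. -/
def ViscSol1 (E : ℝ → ℝ → ℝ → ℝ) (u : ℝ → ℝ) : Prop :=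
  ViscSub1 E u ∧ ViscSuper1 E u

/-- The kinetic energy `F : F(p) = p` on `[0,1]`, `F(p) = 1` on `[1,2]`, `F(p) = p - 1` for `p ≥ 2`. -/
def Fk (p : ℝ) : ℝ := if p ≤ 1 then p else if p ≤ 2 then 1 else p - 1

/-- The 1-periodic potential: `V(x) = x` on `[0,s]`, `V(x) = 2s - x` on `[s,2s]`, `V(x) = 0`
on `[2s,1]`. -/
def Vs (s x : ℝ) : ℝ :=
  if Int.fract x ≤ s then Int.fract x
  else if Int.fract x ≤ 2 * s then 2 * s - Int.fract x
  else 0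

/-
Where a `C¹` function `φ` touches `w` from above, the slope of `φ` is trapped between the extreme
slopes `-7/2` and `1/2` of `w`: if `w - a x` is nondecreasing, so is `φ - a x` to first order on the
right of the contact point, and similarly on the left for the upper bound. On slopes
`p ∈ [-7/2, 1/2]` one has `|3/2 + p| ≤ 2`, where `F ≤ 1`, so a nonnegative potential can only help.
-/

section LocalMin

variable {f : ℝ → ℝ} {f' x : ℝ}

theorem nonneg_of_isLocalMinOn_Ici (hf : HasDerivWithinAt f f' (Ici x) x)
    (hmin : IsLocalMinOn f (Ici x) x) : 0 ≤ f' := by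
  have h_cone : (1 : ℝ) ∈ posTangentConeAt (Ici x) x :=
    mem_posTangentConeAt_of_segment_subset <|
      (convex_Ici x).segment_subset self_mem_Ici (by simp)
  simpa using hmin.hasFDerivWithinAt_nonneg hf.hasFDerivWithinAt h_cone

theorem nonpos_of_isLocalMinOn_Iic (hf : HasDerivWithinAt f f' (Iic x) x)
    (hmin : IsLocalMinOn f (Iic x) x) : f' ≤ 0 := by
  have h_cone : (-1 : ℝ) ∈ posTangentConeAt (Iic x) x :=
    mem_posTangentConeAt_of_segment_subset <|
      (convex_Iic x).segment_subset self_mem_Iic (by simp)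
  simpa using hmin.hasFDerivWithinAt_nonneg hf.hasFDerivWithinAt h_cone

end LocalMin

section Touching

variable {u φ : ℝ → ℝ} {a b p x : ℝ}

theorem le_slope_of_isLocalMaxOn_Ici_sub (hu : MonotoneOn (fun z => u z - a * z) (Ici x))
    (hmax : IsLocalMaxOn (u - φ) (Ici x) x) (hφ : HasDerivWithinAt φ p (Ici x) x) : a ≤ p := by
  have hderiv : HasDerivWithinAt (fun z => φ z - a * z) (p - a) (Ici x) x := by
    simpa using hφ.fun_sub ((hasDerivWithinAt_id x _).const_mul a)
  have hmin : IsLocalMinOn (fun z => φ z - a * z) (Ici x) x := by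
    filter_upwards [hmax, self_mem_nhdsWithin] with z hz hxz
    have := hu self_mem_Ici hxz hxz
    simp only [Pi.sub_apply] at this hz
    linarith
  exact sub_nonneg.1 (nonneg_of_isLocalMinOn_Ici hderiv hmin)

theorem slope_le_of_isLocalMaxOn_Iic_sub (hu : AntitoneOn (fun z => u z - b * z) (Iic x))
    (hmax : IsLocalMaxOn (u - φ) (Iic x) x) (hφ : HasDerivWithinAt φ p (Iic x) x) : p ≤ b := by
  have hderiv : HasDerivWithinAt (fun z => φ z - b * z) (p - b) (Iic x) x := by
    simpa using hφ.fun_sub ((hasDerivWithinAt_id x _).const_mul b)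
  have hmin : IsLocalMinOn (fun z => φ z - b * z) (Iic x) x := by
    filter_upwards [hmax, self_mem_nhdsWithin] with z hz hzx
    have := hu hzx self_mem_Iic hzx
    simp only [Pi.sub_apply] at this hz
    linarith
  exact sub_nonpos.1 (nonpos_of_isLocalMinOn_Iic hderiv hmin)

theorem viscSub1_of_monotone_of_antitone {E : ℝ → ℝ → ℝ → ℝ}
    (ha : Monotone fun z => u z - a * z) (hb : Antitone fun z => u z - b * z)
    (hE : ∀ x, ∀ p ∈ Icc a b, E x (u x) p ≤ 0) : ViscSub1 E u := by
  intro φ hφ x hmax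
  have hderiv : HasDerivAt φ (deriv φ x) x := (hφ.differentiable one_ne_zero x).hasDerivAt
  refine hE x _ ⟨?_, ?_⟩
  · exact le_slope_of_isLocalMaxOn_Ici_sub (ha.monotoneOn _) (hmax.on _) hderiv.hasDerivWithinAt
  · exact slope_le_of_isLocalMaxOn_Iic_sub (hb.antitoneOn _) (hmax.on _) hderiv.hasDerivWithinAt

end Touching

theorem monotoneOn_Icc_of_deriv_nonneg_of_ne {f : ℝ → ℝ} {a b c : ℝ} (hc : c ∈ Icc a b)
    (hf : ContinuousOn f (Icc a b)) (hdiff : ∀ x ∈ Ioo a b, x ≠ c → DifferentiableAt ℝ f x)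
    (hderiv : ∀ x ∈ Ioo a b, x ≠ c → 0 ≤ deriv f x) : MonotoneOn f (Icc a b) := by
  have h_left : MonotoneOn f (Icc a c) := by
    have h_mem : ∀ x ∈ Ioo a c, x ∈ Ioo a b := fun x hx => ⟨hx.1, hx.2.trans_le hc.2⟩
    refine monotoneOn_of_deriv_nonneg (convex_Icc a c) (hf.mono (Icc_subset_Icc_right hc.2)) ?_ ?_
      <;> rw [interior_Icc]
    · exact fun x hx => (hdiff x (h_mem x hx) hx.2.ne).differentiableWithinAt
    · exact fun x hx => hderiv x (h_mem x hx) hx.2.ne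
  have h_right : MonotoneOn f (Icc c b) := by
    have h_mem : ∀ x ∈ Ioo c b, x ∈ Ioo a b := fun x hx => ⟨hc.1.trans_lt hx.1, hx.2⟩
    refine monotoneOn_of_deriv_nonneg (convex_Icc c b) (hf.mono (Icc_subset_Icc_left hc.1)) ?_ ?_
      <;> rw [interior_Icc]
    · exact fun x hx => (hdiff x (h_mem x hx) hx.1.ne').differentiableWithinAt
    · exact fun x hx => hderiv x (h_mem x hx) hx.1.ne'
  rw [← Icc_union_Icc_eq_Icc hc.1 hc.2]
  exact h_left.union_right h_right (isGreatest_Icc hc.1) (isLeast_Icc hc.2)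

theorem monotone_sub_mul_of_periodic {R : Type*} [CommRing R] [LinearOrder R]
    [IsStrictOrderedRing R] [Archimedean R] {u : R → R} {T : R} (hu : Function.Periodic u T)
    (hT : 0 < T) {m a : R} (hmono : MonotoneOn (fun x => u x - m * x) (Icc a (a + T))) :
    Monotone fun x => u x - m * x := by
  let g : AddConstMap R R T (-(m * T)) :=
    { toFun := fun x => u x - m * x
      map_add_const' := fun x => by rw [hu x]; ring }
  exact (AddConstMapClass.monotone_iff_Icc (f := g) hT a).2 hmono

section PeriodicSlope

variable {u : ℝ → ℝ} {T a c m : ℝ}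

theorem monotone_sub_mul_of_periodic_of_le_deriv (hu : Function.Periodic u T) (hT : 0 < T)
    (hcont : ContinuousOn u (Icc a (a + T))) (hc : c ∈ Icc a (a + T))
    (hdiff : ∀ x ∈ Ioo a (a + T), x ≠ c → DifferentiableAt ℝ u x)
    (hderiv : ∀ x ∈ Ioo a (a + T), x ≠ c → m ≤ deriv u x) :
    Monotone fun x => u x - m * x := by
  have h_lin : ∀ x, HasDerivAt (fun x => m * x) m x := fun _ => hasDerivAt_const_mul m
  refine monotone_sub_mul_of_periodic hu hT (a := a) ?_
  refine monotoneOn_Icc_of_deriv_nonneg_of_ne hc (by fun_prop)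
    (fun x hx hxc => (hdiff x hx hxc).fun_sub (h_lin x).differentiableAt) fun x hx hxc => ?_
  rw [((hdiff x hx hxc).hasDerivAt.fun_sub (h_lin x)).deriv]
  exact sub_nonneg.2 (hderiv x hx hxc)

theorem antitone_sub_mul_of_periodic_of_deriv_le (hu : Function.Periodic u T) (hT : 0 < T)
    (hcont : ContinuousOn u (Icc a (a + T))) (hc : c ∈ Icc a (a + T))
    (hdiff : ∀ x ∈ Ioo a (a + T), x ≠ c → DifferentiableAt ℝ u x)
    (hderiv : ∀ x ∈ Ioo a (a + T), x ≠ c → deriv u x ≤ m) :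
    Antitone fun x => u x - m * x := by
  have h_neg : Monotone fun x => (-u) x - -m * x :=
    monotone_sub_mul_of_periodic_of_le_deriv (fun x => congrArg Neg.neg (hu x)) hT hcont.neg hc
      (fun x hx hxc => (hdiff x hx hxc).neg)
      fun x hx hxc => by rw [deriv.neg]; exact neg_le_neg (hderiv x hx hxc)
  intro x z hxz
  have := h_neg hxz
  simp only [Pi.neg_apply] at this
  linarith

end PeriodicSlope

theorem Fk_le_one {p : ℝ} (hp : p ≤ 2) : Fk p ≤ 1 := by
  unfold Fk
  split_ifs <;> linarith

theorem Vs_nonneg (s x : ℝ) : 0 ≤ Vs s x := by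
  have := Int.fract_nonneg x
  unfold Vs
  split_ifs <;> linarith

theorem stmt12_general {V : ℝ → ℝ} (hV : ∀ x, 0 ≤ V x) {y : ℝ} {w : ℝ → ℝ}
    (hwcont : Continuous w) (hwper : Function.Periodic w 1)
    (hw1 : ∀ x ∈ Set.Ioo (y - 1 / 8) y, HasDerivAt w (-(7 : ℝ) / 2) x)
    (hw2 : ∀ x ∈ Set.Ioo y (y + 7 / 8), HasDerivAt w (1 / 2) x) :
    ViscSub1 (fun x _ p => Fk |3 / 2 + p| - V x - 1) w := by
  have hy : y ∈ Icc (y - 1 / 8) (y - 1 / 8 + 1) := ⟨by linarith, by linarith⟩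
  have hslope : ∀ x ∈ Ioo (y - 1 / 8) (y - 1 / 8 + 1), x ≠ y →
      DifferentiableAt ℝ w x ∧ deriv w x ∈ Icc (-(7 : ℝ) / 2) (1 / 2) := by
    intro x hx hxy
    rcases hxy.lt_or_gt with hlt | hgt
    · have hd := hw1 x ⟨hx.1, hlt⟩
      exact ⟨hd.differentiableAt, by rw [hd.deriv]; norm_num⟩
    · have hd := hw2 x ⟨hgt, by linarith [hx.2]⟩
      exact ⟨hd.differentiableAt, by rw [hd.deriv]; norm_num⟩
  have hdiff := fun x hx hxy => (hslope x hx hxy).1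
  refine viscSub1_of_monotone_of_antitone
    (monotone_sub_mul_of_periodic_of_le_deriv hwper one_pos hwcont.continuousOn hy hdiff
      fun x hx hxy => (hslope x hx hxy).2.1)
    (antitone_sub_mul_of_periodic_of_deriv_le hwper one_pos hwcont.continuousOn hy hdiff
      fun x hx hxy => (hslope x hx hxy).2.2) fun x p hp => ?_
  have hF : Fk |3 / 2 + p| ≤ 1 := Fk_le_one (abs_le.2 ⟨by linarith [hp.1], by linarith [hp.2]⟩)
  linarith [hV x]

theorem stmt12 (s : ℝ) (hs : 0 < s) (hs' : s ≤ 1 / 5) (y : ℝ)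
    (w : ℝ → ℝ) (hwcont : Continuous w) (hwper : Function.Periodic w 1) (hwy : w y = 0)
    (hw1 : ∀ x ∈ Set.Ioo (y - 1 / 8) y, HasDerivAt w (-(7 : ℝ) / 2) x)
    (hw2 : ∀ x ∈ Set.Ioo y (y + 7 / 8), HasDerivAt w (1 / 2) x) :
    ViscSub1 (fun x _ p => Fk |3 / 2 + p| - Vs s x - 1) w :=
  stmt12_general (Vs_nonneg s) hwcont hwper hw1 hw2
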